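/- Define T : ℝ → ℝ by T(x) = Σ_{k=0}^{∞} 2^{-k} · dist(2^k · x, ℤ), where dist(y, ℤ) is the distance from y to the nearest integer. Then T is continuous on ℝ but nowhere differentiable: for every x ∈ ℝ, T is not differentiable at x. -/

import Mathlib

/-- The Takagi-type function `T(x) = Σ_{k=0}^{∞} 2^{-k} dist(2^k x, ℤ)`. -/
noncomputable def takagi (x : ℝ) : ℝ :=
  ∑' k : ℕ, (2 : ℝ) ^ (-(k : ℤ)) *
    Metric.infDist (((2 : ℝ) ^ k) * x) (Set.range ((↑) : ℤ → ℝ))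

lemma tk_dist_eq (y : ℝ) (j : ℤ) (h1 : (j : ℝ) ≤ y) (h2 : y ≤ j + 1) :
    Metric.infDist y (Set.range ((↑) : ℤ → ℝ)) = min (y - j) (j + 1 - y) := by
  apply le_antisymm
  · apply le_min
    · have := Metric.infDist_le_dist_of_mem (x := y) (Set.mem_range_self (f := ((↑) : ℤ → ℝ)) j)
      rwa [Real.dist_eq, abs_of_nonneg (by linarith)] at this
    · have := Metric.infDist_le_dist_of_mem (x := y)
        (Set.mem_range_self (f := ((↑) : ℤ → ℝ)) (j + 1))
      rw [Real.dist_eq, abs_of_nonpos (by push_cast; linarith)] at this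
      push_cast at this
      linarith
  · rw [Metric.le_infDist (Set.range_nonempty _)]
    rintro _ ⟨z, rfl⟩
    rw [Real.dist_eq]
    rcases lt_or_ge j z with h | h
    · have : (j : ℝ) + 1 ≤ z := by exact_mod_cast h
      exact (min_le_right _ _).trans (by linarith [neg_abs_le (y - z)])
    · have : (z : ℝ) ≤ j := by exact_mod_cast h
      exact (min_le_left _ _).trans (by linarith [le_abs_self (y - z)])

lemma tk_dist_le (y : ℝ) : Metric.infDist y (Set.range ((↑) : ℤ → ℝ)) ≤ 1 := by
  rw [tk_dist_eq y ⌊y⌋ (Int.floor_le y) (Int.lt_floor_add_one y).le]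
  exact (min_le_left _ _).trans (by linarith [Int.lt_floor_add_one y])

lemma tk_dist_int (m : ℤ) : Metric.infDist (m : ℝ) (Set.range ((↑) : ℤ → ℝ)) = 0 :=
  Metric.infDist_zero_of_mem (Set.mem_range_self m)

lemma tk_pow (k : ℕ) : (2 : ℝ) ^ (-(k : ℤ)) = (1 / 2) ^ k := by
  rw [zpow_neg, zpow_natCast, one_div, inv_pow]

lemma tk_bound (k : ℕ) (x : ℝ) : ‖(2 : ℝ) ^ (-(k : ℤ)) *
    Metric.infDist (((2 : ℝ) ^ k) * x) (Set.range ((↑) : ℤ → ℝ))‖ ≤ (1 / 2) ^ k := by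
  rw [tk_pow, norm_mul, Real.norm_of_nonneg (by positivity),
    Real.norm_of_nonneg Metric.infDist_nonneg]
  exact mul_le_of_le_one_right (by positivity) (tk_dist_le _)

lemma tk_summable (x : ℝ) : Summable fun k : ℕ => (2 : ℝ) ^ (-(k : ℤ)) *
    Metric.infDist (((2 : ℝ) ^ k) * x) (Set.range ((↑) : ℤ → ℝ)) :=
  Summable.of_norm_bounded summable_geometric_two (fun k => tk_bound k x)

lemma tk_continuous : Continuous takagi := by
  unfold takagi
  refine continuous_tsum (fun k => ?_) summable_geometric_two tk_bound
  exact continuous_const.mul ((Metric.continuous_infDist_pt _).comp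
    (continuous_const.mul continuous_id))

lemma tk_fe (x : ℝ) : takagi x =
    Metric.infDist x (Set.range ((↑) : ℤ → ℝ)) + takagi (2 * x) / 2 := by
  unfold takagi
  rw [(tk_summable x).tsum_eq_zero_add, ← tsum_div_const]
  congr 1
  · simp
  · congr 1
    funext k
    rw [tk_pow, tk_pow, ← mul_assoc ((2 : ℝ) ^ k) 2 x, ← pow_succ, pow_succ (1 / 2 : ℝ)]
    ring

lemma tk_int (m : ℤ) : takagi m = 0 := by
  unfold takagi
  have : ∀ k : ℕ, (2 : ℝ) ^ (-(k : ℤ)) *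
      Metric.infDist (((2 : ℝ) ^ k) * m) (Set.range ((↑) : ℤ → ℝ)) = 0 := by
    intro k
    have := tk_dist_int (2 ^ k * m)
    push_cast at this
    rw [this, mul_zero]
  simp only [this, tsum_zero]

lemma tk_second (n : ℕ) (m : ℤ) :
    (takagi (m / 2 ^ n) + takagi ((m + 1) / 2 ^ n)) / 2 + 1 / 2 ^ (n + 1)
      ≤ takagi ((m + 1 / 2) / 2 ^ n) := by
  induction n with
  | zero =>
    have h1 := tk_int m
    have h2 := tk_int (m + 1)
    have h3 := tk_int (2 * m + 1)
    have h4 := tk_fe (m + 1 / 2)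
    rw [tk_dist_eq _ m (by linarith) (by linarith)] at h4
    push_cast at h2 h3
    rw [show 2 * ((m : ℝ) + 1 / 2) = 2 * m + 1 by ring, h3] at h4
    simp only [pow_zero, div_one, h1, h2, h4]
    rw [show (m : ℝ) + 1 / 2 - m = 1 / 2 by ring, show (m : ℝ) + 1 - (m + 1 / 2) = 1 / 2 by ring]
    norm_num
  | succ n ih =>
    have hp : (0 : ℝ) < 2 ^ (n + 1) := by positivity
    have key : ∀ y : ℝ, 2 * (y / 2 ^ (n + 1)) = y / 2 ^ n := by
      intro y; rw [pow_succ]; field_simp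
    rw [tk_fe (m / 2 ^ (n + 1)), tk_fe ((m + 1) / 2 ^ (n + 1)),
      tk_fe ((m + 1 / 2) / 2 ^ (n + 1)), key, key, key]
    obtain ⟨j, hj1, hj2⟩ : ∃ j : ℤ, j * 2 ^ (n + 1) ≤ m ∧ m + 1 ≤ (j + 1) * 2 ^ (n + 1) := by
      have hq : (0 : ℤ) < 2 ^ (n + 1) := by positivity
      exact ⟨m / 2 ^ (n + 1), Int.ediv_mul_le _ hq.ne', Int.lt_ediv_add_one_mul_self m hq⟩
    have hj1' : (j : ℝ) * 2 ^ (n + 1) ≤ m := by exact_mod_cast hj1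
    have hj2' : (m : ℝ) + 1 ≤ (j + 1) * 2 ^ (n + 1) := by exact_mod_cast hj2
    have hd : ∀ y : ℝ, (m : ℝ) ≤ y → y ≤ m + 1 →
        Metric.infDist (y / 2 ^ (n + 1)) (Set.range ((↑) : ℤ → ℝ)) =
        min (y / 2 ^ (n + 1) - j) (j + 1 - y / 2 ^ (n + 1)) := by
      intro y h1 h2
      apply tk_dist_eq
      · rw [le_div_iff₀ hp]; linarith
      · rw [div_le_iff₀ hp]; linarith
    rw [hd m le_rfl (by linarith), hd (m + 1) (by linarith) le_rfl,
      hd (m + 1 / 2) (by linarith) (by linarith)]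
    have e : ((m : ℝ) + 1 / 2) / 2 ^ (n + 1) =
      (m / 2 ^ (n + 1) + (m + 1) / 2 ^ (n + 1)) / 2 := by ring
    have e2 : (1 : ℝ) / 2 ^ (n + 1 + 1) = 1 / 2 ^ (n + 1) / 2 := by
      rw [pow_succ (2 : ℝ) (n + 1)]; field_simp
    rw [e, e2]
    generalize (m : ℝ) / 2 ^ (n + 1) = a
    generalize ((m : ℝ) + 1) / 2 ^ (n + 1) = b
    have := min_le_left (a - j) (j + 1 - a)
    have := min_le_right (a - j) (j + 1 - a)
    have := min_le_left (b - j) (j + 1 - b)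
    have := min_le_right (b - j) (j + 1 - b)
    have : (min (a - j) (j + 1 - a) + min (b - j) (j + 1 - b)) / 2 ≤
        min ((a + b) / 2 - j) (j + 1 - (a + b) / 2) := by
      apply le_min <;> linarith
    linarith

theorem takagi_continuous_nowhere_differentiable :
    Continuous takagi ∧ ∀ x : ℝ, ¬ DifferentiableAt ℝ takagi x := by
  refine ⟨tk_continuous, fun x hx => ?_⟩
  have h := hx.hasDerivAt.isLittleO.def (show (0 : ℝ) < 1 / 4 by norm_num)
  rw [Metric.eventually_nhds_iff] at h
  obtain ⟨δ, hδ, h⟩ := h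
  obtain ⟨n, hn⟩ := exists_pow_lt_of_lt_one hδ (show (1 / 2 : ℝ) < 1 by norm_num)
  rw [one_div, inv_pow] at hn
  have hp : (0 : ℝ) < 2 ^ n := by positivity
  set r : ℝ := (2 ^ n)⁻¹ with hr
  have hr0 : 0 < r := by positivity
  have hs := tk_second n ⌊2 ^ n * x⌋
  have hf1 := Int.floor_le (2 ^ n * x)
  have hf2 := Int.lt_floor_add_one (2 ^ n * x)
  generalize ⌊2 ^ n * x⌋ = m at hs hf1 hf2
  have e1 : (m : ℝ) / 2 ^ n ≤ x := by rw [div_le_iff₀ hp]; linarith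
  have e2 : x ≤ ((m : ℝ) + 1) / 2 ^ n := by rw [le_div_iff₀ hp]; linarith
  have e3 : (1 : ℝ) / 2 ^ (n + 1) = r / 2 := by rw [hr, pow_succ]; field_simp
  have e4 : ((m : ℝ) + 1) / 2 ^ n = m / 2 ^ n + r := by rw [hr]; ring
  have e5 : ((m : ℝ) + 1 / 2) / 2 ^ n = m / 2 ^ n + r / 2 := by rw [hr]; ring
  rw [e3, e4, e5] at hs
  rw [e4] at e2
  generalize (m : ℝ) / 2 ^ n = u at *
  have hu := @h u (by rw [Real.dist_eq, abs_lt]; constructor <;> linarith)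
  have hv := @h (u + r) (by rw [Real.dist_eq, abs_lt]; constructor <;> linarith)
  have hw := @h (u + r / 2) (by rw [Real.dist_eq, abs_lt]; constructor <;> linarith)
  simp only [Real.norm_eq_abs, smul_eq_mul] at hu hv hw
  rw [abs_of_nonpos (show u - x ≤ 0 by linarith)] at hu
  rw [abs_of_nonneg (show 0 ≤ u + r - x by linarith)] at hv
  have hw' : |u + r / 2 - x| ≤ r / 2 := by rw [abs_le]; constructor <;> linarith
  have hu1 := (abs_le.1 hu).1
  have hv1 := (abs_le.1 hv).1
  have hw1 := (abs_le.1 hw).2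
  generalize deriv takagi x = L at *
  ring_nf at *
  linarith
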